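/- arXiv:2109.09485 — 9 statements merged into one kernel-verified Lean document; each statement's English description precedes it below -/
import Mathlib

section
/- For every real s > -1 and every positive integer N there exists a constant C = C(s, N) ≥ 1 such that for all μ ∈ [0,1] and all z₁, z₂ ∈ ℝ^N with μ + |z₁| + |z₂| > 0, one has C⁻¹ (μ² + |z₁|² + |z₂|²)^{s/2} ≤ ∫₀¹ (μ² + |z₁ + λ(z₂ − z₁)|²)^{s/2} λ dλ ≤ C (μ² + |z₁|² + |z₂|²)^{s/2}. -/
open MeasureTheory

lemma aux_quad {E : Type*} [NormedAddCommGroup E] [InnerProductSpace ℝ E] (μ : ℝ) (x y : E) :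
    ∃ t ∈ Set.Icc (0:ℝ) 1, ∀ l ∈ Set.Icc (0:ℝ) 1,
      (μ ^ 2 + ‖x‖ ^ 2 + ‖y‖ ^ 2) / 16 * (l - t) ^ 2 ≤ μ ^ 2 + ‖x + l • (y - x)‖ ^ 2 := by
  set A := μ ^ 2 + ‖x‖ ^ 2 + ‖y‖ ^ 2 with hA
  obtain ⟨d, rfl⟩ : ∃ d, y = x + d := ⟨y - x, by abel⟩
  have hA0 : 0 ≤ A := by positivity
  have hexp : ∀ l : ℝ, ‖x + l • (x + d - x)‖ ^ 2
      = ‖x‖ ^ 2 + 2 * l * inner ℝ x d + l ^ 2 * ‖d‖ ^ 2 := by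
    intro l
    rw [add_sub_cancel_left, norm_add_sq_real, inner_smul_right, norm_smul, mul_pow,
      Real.norm_eq_abs, sq_abs]
    ring
  have h1 := hexp 1
  simp only [one_smul, add_sub_cancel] at h1
  have hcs : inner ℝ x d ^ 2 ≤ ‖x‖ ^ 2 * ‖d‖ ^ 2 := by
    have := abs_real_inner_le_norm x d
    rw [← mul_pow, ← sq_abs]
    gcongr
  simp only [hexp]
  rw [h1] at hA
  generalize inner ℝ x d = b at *
  have hX : 0 ≤ ‖x‖ ^ 2 := by positivity
  have hD : 0 ≤ ‖d‖ ^ 2 := by positivity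
  generalize ‖x‖ ^ 2 = X at *
  generalize ‖d‖ ^ 2 = D at *
  have hM : 0 ≤ μ ^ 2 := by positivity
  generalize μ ^ 2 = M at *
  have hb2 : ∀ k : ℝ, 0 ≤ X + 2 * k * b + k ^ 2 * D := by
    intro k
    rcases hD.eq_or_lt with h | h
    · have : b = 0 := by
        rw [← h] at hcs
        nlinarith [sq_nonneg b]
      subst this; nlinarith
    · have : 0 ≤ D * (X + 2 * k * b + k ^ 2 * D) := by nlinarith [sq_nonneg (b + k * D)]
      exact nonneg_of_mul_nonneg_right this h
  by_cases hc : A / 16 ≤ D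
  · by_cases hD0 : D = 0
    · refine ⟨0, by simp, fun l hl => ?_⟩
      have : A = 0 := by linarith
      rw [this]
      have := hb2 l
      simp; linarith
    have hDp : 0 < D := lt_of_le_of_ne hD (Ne.symm hD0)
    obtain ⟨u, hu⟩ : ∃ u, b = - u * D := ⟨-b / D, by field_simp⟩
    subst hu
    have key : ∀ l : ℝ, D * (l - u) ^ 2 ≤ M + (X + 2 * l * (-u * D) + l ^ 2 * D) := by
      intro l
      have := hb2 u
      nlinarith
    refine ⟨max 0 (min 1 u), by simp, fun l hl => ?_⟩
    refine le_trans ?_ (key l)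
    have : (l - max 0 (min 1 u)) ^ 2 ≤ (l - u) ^ 2 := by
      obtain ⟨h0, h1⟩ := hl
      rcases le_total 1 u with h | h
      · simp [h]; nlinarith
      · rcases le_total 0 u with h' | h'
        · simp [h, h']
        · simp [h, h']; nlinarith
    gcongr
  · push Not at hc
    refine ⟨0, by simp, fun l hl => ?_⟩
    have hl2 : l ^ 2 ≤ 1 := by nlinarith [hl.1, hl.2]
    have e1 := hb2 (2 * l)
    have e2 := hb2 (-1)
    have : l ^ 2 * D ≤ D := by nlinarith
    have : A / 16 * l ^ 2 ≤ A / 16 := by nlinarith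
    rw [sub_zero]
    nlinarith

lemma aux_upper {E : Type*} [NormedAddCommGroup E] [InnerProductSpace ℝ E] (μ : ℝ) (x y : E)
    (l : ℝ) (hl : l ∈ Set.Icc (0:ℝ) 1) :
    μ ^ 2 + ‖x + l • (y - x)‖ ^ 2 ≤ μ ^ 2 + ‖x‖ ^ 2 + ‖y‖ ^ 2 := by
  obtain ⟨h0, h1⟩ := hl
  have : ‖x + l • (y - x)‖ ≤ (1 - l) * ‖x‖ + l * ‖y‖ := by
    have e : x + l • (y - x) = (1 - l) • x + l • y := by module
    rw [e]
    refine (norm_add_le _ _).trans ?_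
    rw [norm_smul, norm_smul, Real.norm_of_nonneg h0, Real.norm_of_nonneg (by linarith)]
  have h2 : ‖x + l • (y - x)‖ ^ 2 ≤ ((1 - l) * ‖x‖ + l * ‖y‖) ^ 2 := by gcongr
  have hl' : 0 ≤ l * (1 - l) := mul_nonneg h0 (by linarith)
  nlinarith [mul_nonneg hl' (sq_nonneg (‖x‖ - ‖y‖)), sq_nonneg ‖x‖, sq_nonneg ‖y‖,
    mul_nonneg h0 (sq_nonneg ‖x‖), mul_nonneg (sub_nonneg.2 h1) (sq_nonneg ‖y‖)]

lemma aux_int (s : ℝ) (hs : -1 < s) :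
    IntervalIntegrable (fun x : ℝ => |x| ^ s) volume (-1) 1 := by
  have h : IntervalIntegrable (fun x : ℝ => |x| ^ s) volume 0 1 := by
    refine (intervalIntegral.intervalIntegrable_rpow' hs (a := 0) (b := 1)).congr ?_
    intro x hx
    rw [Set.uIoc_of_le zero_le_one] at hx
    simp [abs_of_pos hx.1]
  have h' := (IntervalIntegrable.iff_comp_neg).1 h
  simp only [abs_neg, neg_zero] at h'
  exact h'.symm.trans h

lemma aux_pow (B v s : ℝ) (hB : 0 ≤ B) : (B * v ^ 2) ^ (s / 2) = B ^ (s / 2) * |v| ^ s := by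
  rw [Real.mul_rpow hB (sq_nonneg _), ← sq_abs v, ← Real.rpow_natCast, ← Real.rpow_mul (abs_nonneg _)]
  congr 2
  push_cast; ring

/-- two-sided bound for `∫₀¹ (μ² + |z₁ + λ(z₂ − z₁)|²)^{s/2} λ dλ`. -/
theorem stmt0 (s : ℝ) (hs : -1 < s) (N : ℕ) (hN : 0 < N) :
    ∃ C : ℝ, 1 ≤ C ∧
      ∀ μ : ℝ, μ ∈ Set.Icc (0 : ℝ) 1 →
        ∀ z₁ z₂ : EuclideanSpace ℝ (Fin N), 0 < μ + ‖z₁‖ + ‖z₂‖ →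
          C⁻¹ * (μ ^ 2 + ‖z₁‖ ^ 2 + ‖z₂‖ ^ 2) ^ (s / 2) ≤
              (∫ l in (0 : ℝ)..1, (μ ^ 2 + ‖z₁ + l • (z₂ - z₁)‖ ^ 2) ^ (s / 2) * l) ∧
            (∫ l in (0 : ℝ)..1, (μ ^ 2 + ‖z₁ + l • (z₂ - z₁)‖ ^ 2) ^ (s / 2) * l) ≤
              C * (μ ^ 2 + ‖z₁‖ ^ 2 + ‖z₂‖ ^ 2) ^ (s / 2) := by
  have hApos : ∀ μ : ℝ, μ ∈ Set.Icc (0 : ℝ) 1 →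
        ∀ z₁ z₂ : EuclideanSpace ℝ (Fin N), 0 < μ + ‖z₁‖ + ‖z₂‖ →
        0 < μ ^ 2 + ‖z₁‖ ^ 2 + ‖z₂‖ ^ 2 := by
    intro μ hμ x y h
    by_contra hc
    have h1 : μ = 0 := by nlinarith [sq_nonneg μ, sq_nonneg ‖x‖, sq_nonneg ‖y‖]
    have h2 : ‖x‖ = 0 := by nlinarith [sq_nonneg μ, sq_nonneg ‖x‖, sq_nonneg ‖y‖]
    have h3 : ‖y‖ = 0 := by nlinarith [sq_nonneg μ, sq_nonneg ‖x‖, sq_nonneg ‖y‖]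
    linarith
  rcases le_or_gt 0 s with hs0 | hs0
  · set c : ℝ := (1/16) ^ (s/2) * (1/8) ^ s * (1/16) with hc
    have hcpos : 0 < c := by positivity
    refine ⟨1 + c⁻¹, by have := inv_pos.2 hcpos; linarith, fun μ hμ x y h => ?_⟩
    have hA := hApos μ hμ x y h
    obtain ⟨t, ht, hq⟩ := aux_quad μ x y
    have hup := aux_upper μ x y
    have hcont : Continuous (fun l : ℝ => (μ ^ 2 + ‖x + l • (y - x)‖ ^ 2) ^ (s / 2) * l) := by
      refine Continuous.mul ?_ continuous_id
      refine Continuous.rpow_const (by fun_prop) (fun _ => Or.inr (by linarith))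
    set A := μ ^ 2 + ‖x‖ ^ 2 + ‖y‖ ^ 2
    have hAp : 0 < A ^ (s / 2) := by positivity
    constructor
    · have h1 : (1 + c⁻¹)⁻¹ ≤ c := by
        rw [inv_le_comm₀ (by positivity) hcpos]; linarith
      obtain ⟨a, ha, ha', hsep⟩ : ∃ a : ℝ, 1/2 ≤ a ∧ a + 1/8 ≤ 1 ∧
          ∀ l ∈ Set.Icc a (a + 1/8), 1/8 ≤ |l - t| := by
        rcases le_total t (3/4) with h | h
        · refine ⟨7/8, by norm_num, by norm_num, fun l hl => ?_⟩
          rw [le_abs]; left; linarith [hl.1]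
        · refine ⟨1/2, by norm_num, by norm_num, fun l hl => ?_⟩
          rw [le_abs]; right; linarith [hl.2]
      calc (1 + c⁻¹)⁻¹ * A ^ (s / 2) ≤ c * A ^ (s/2) := by gcongr
        _ = ∫ l in a..(a + 1/8), (A / 16) ^ (s/2) * (1/8) ^ s * (1/2) := by
            rw [intervalIntegral.integral_const, div_eq_mul_one_div A,
              Real.mul_rpow hA.le (by norm_num), hc, smul_eq_mul]
            ring
        _ ≤ ∫ l in a..(a + 1/8), (μ ^ 2 + ‖x + l • (y - x)‖ ^ 2) ^ (s / 2) * l := by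
            refine intervalIntegral.integral_mono_on (by linarith) (by simp)
              (hcont.intervalIntegrable _ _) (fun l hl => ?_)
            have hl01 : l ∈ Set.Icc (0:ℝ) 1 := ⟨by linarith [hl.1], by linarith [hl.2]⟩
            have hh := hsep l hl
            have : (A / 16) ^ (s/2) * (1/8) ^ s ≤ (μ ^ 2 + ‖x + l • (y - x)‖ ^ 2) ^ (s / 2) := by
              calc (A / 16) ^ (s/2) * (1/8) ^ s ≤ (A / 16) ^ (s/2) * |l - t| ^ s := by gcongr
                _ = (A / 16 * (l - t) ^ 2) ^ (s / 2) := (aux_pow _ _ _ (by positivity)).symm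
                _ ≤ _ := by
                  have := hq l hl01
                  gcongr
            have hl2 : 1/2 ≤ l := ha.trans hl.1
            gcongr
        _ ≤ _ := by
            refine intervalIntegral.integral_mono_interval (by linarith) (by linarith) ha' ?_
              (hcont.intervalIntegrable _ _)
            refine (ae_restrict_iff' measurableSet_Ioc).2 (Filter.Eventually.of_forall fun l hl => ?_)
            have := hl.1.le
            simp only [Pi.zero_apply]
            positivity
    · calc _ ≤ ∫ l in (0:ℝ)..1, A ^ (s/2) := by
            refine intervalIntegral.integral_mono_on (by linarith)
              (hcont.intervalIntegrable _ _) (by simp) (fun l hl => ?_)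
            calc _ ≤ A ^ (s/2) * 1 := by
                  have := hup l hl
                  have := hl.1
                  have := hl.2
                  gcongr
              _ = _ := mul_one _
        _ = 1 * A ^ (s/2) := by simp
        _ ≤ _ := by
          have := inv_pos.2 hcpos
          gcongr; linarith
  · set K : ℝ := ∫ x in (-1:ℝ)..1, |x| ^ s with hK
    have hK0 : 0 ≤ K := intervalIntegral.integral_nonneg (by norm_num) (fun _ _ => by positivity)
    have hint := aux_int s hs
    have hc0 : 0 ≤ (1/16:ℝ) ^ (s/2) * K := by positivity
    refine ⟨2 + (1/16) ^ (s/2) * K, by linarith, fun μ hμ x y h => ?_⟩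
    have hA := hApos μ hμ x y h
    obtain ⟨t, ht, hq⟩ := aux_quad μ x y
    have hup := aux_upper μ x y
    have hmeas : Measurable (fun l : ℝ => (μ ^ 2 + ‖x + l • (y - x)‖ ^ 2) ^ (s / 2) * l) := by
      have : Continuous (fun l : ℝ => μ ^ 2 + ‖x + l • (y - x)‖ ^ 2) := by fun_prop
      exact (this.measurable.pow_const _).mul measurable_id
    set A := μ ^ 2 + ‖x‖ ^ 2 + ‖y‖ ^ 2
    have hAp : 0 < A ^ (s / 2) := by positivity
    have hfpos : ∀ l ∈ Set.Icc (0:ℝ) 1, l ≠ t → 0 < A / 16 * (l - t) ^ 2 := by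
      intro l hl hlt
      have : l - t ≠ 0 := sub_ne_zero.2 hlt
      positivity
    have hint0 : IntervalIntegrable (fun x : ℝ => |x| ^ s) volume (0 - t) (1 - t) := by
      refine hint.mono_set ?_
      rw [Set.uIcc_of_le (by linarith), Set.uIcc_of_le (by norm_num)]
      exact Set.Icc_subset_Icc (by linarith [ht.2]) (by linarith [ht.1])
    have hint1 : IntervalIntegrable (fun l : ℝ => |l - t| ^ s) volume 0 1 := by
      have := hint0.comp_sub_right t
      simpa using this
    have hgint : IntervalIntegrable (fun l : ℝ => (A / 16) ^ (s/2) * |l - t| ^ s) volume 0 1 :=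
      hint1.const_mul _
    have hne : ∀ᵐ l : ℝ, l ≠ t := by
      simp [ae_iff]
    have hbd : ∀ l ∈ Set.Icc (0:ℝ) 1, l ≠ t →
        (μ ^ 2 + ‖x + l • (y - x)‖ ^ 2) ^ (s / 2) * l ≤ (A / 16) ^ (s/2) * |l - t| ^ s := by
      intro l hl hlt
      rw [← aux_pow _ _ _ (by positivity)]
      have := Real.rpow_le_rpow_of_nonpos (hfpos l hl hlt) (hq l hl) (by linarith : s / 2 ≤ 0)
      calc _ ≤ (A / 16 * (l - t) ^ 2) ^ (s / 2) * 1 := by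
            have := hl.1
            have := hl.2
            gcongr
        _ = _ := mul_one _
    have hfint : IntervalIntegrable
        (fun l : ℝ => (μ ^ 2 + ‖x + l • (y - x)‖ ^ 2) ^ (s / 2) * l) volume 0 1 := by
      refine hgint.mono_fun' hmeas.aestronglyMeasurable ?_
      rw [Set.uIoc_of_le zero_le_one]
      refine (ae_restrict_iff' measurableSet_Ioc).2 ?_
      filter_upwards [hne] with l hl hl'
      have := hbd l ⟨hl'.1.le, hl'.2⟩ hl
      have h0 := hl'.1.le
      rw [Real.norm_of_nonneg (by positivity)]
      exact this
    have hae : ∀ᵐ l ∂(volume.restrict (Set.Icc (0:ℝ) 1)), l ∈ Set.Icc (0:ℝ) 1 ∧ l ≠ t :=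
      (ae_restrict_iff' measurableSet_Icc).2 (by filter_upwards [hne] with l hl hl' using ⟨hl', hl⟩)
    constructor
    · calc (2 + (1/16) ^ (s/2) * K)⁻¹ * A ^ (s / 2) ≤ 2⁻¹ * A ^ (s/2) := by
            gcongr; linarith
        _ = ∫ l in (0:ℝ)..1, A ^ (s/2) * l := by
            rw [intervalIntegral.integral_const_mul, integral_id]; ring
        _ ≤ _ := by
            refine intervalIntegral.integral_mono_ae_restrict zero_le_one
              ((continuous_const.mul continuous_id).intervalIntegrable _ _) hfint ?_
            filter_upwards [hae] with l hl
            have h0 := hl.1.1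
            have := Real.rpow_le_rpow_of_nonpos ((hfpos l hl.1 hl.2).trans_le (hq l hl.1))
              (hup l hl.1) (by linarith : s / 2 ≤ 0)
            gcongr
    · calc _ ≤ ∫ l in (0:ℝ)..1, (A / 16) ^ (s/2) * |l - t| ^ s := by
            refine intervalIntegral.integral_mono_ae_restrict zero_le_one hfint hgint ?_
            filter_upwards [hae] with l hl using hbd l hl.1 hl.2
        _ = (A / 16) ^ (s/2) * ∫ x in (0 - t)..(1 - t), |x| ^ s := by
            rw [intervalIntegral.integral_const_mul,
              intervalIntegral.integral_comp_sub_right (fun x => |x| ^ s) t]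
        _ ≤ (A / 16) ^ (s/2) * K := by
            gcongr
            refine intervalIntegral.integral_mono_interval (by linarith [ht.2]) (by linarith)
              (by linarith [ht.1]) ?_ hint
            exact Filter.Eventually.of_forall fun l => by simp only [Pi.zero_apply]; positivity
        _ = ((1/16) ^ (s/2) * K) * A ^ (s/2) := by
            rw [div_eq_mul_one_div A, Real.mul_rpow hA.le (by norm_num)]; ring
        _ ≤ _ := by gcongr; linarith
end

section
/- For every real t ≥ 2 and every positive integer N there exists a constant C = C(t, N) ≥ 1 such that for all μ ∈ [0,1] and all z₁, z₂ ∈ ℝ^N, one has C⁻¹ (μ² + |z₁|² + |z₂|²)^{(t−2)/2} |z₁ − z₂|² ≤ |V_{μ,t}(z₁) − V_{μ,t}(z₂)|² ≤ C (μ² + |z₁|² + |z₂|²)^{(t−2)/2} |z₁ − z₂|². -/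
lemma aux_scalar (p : ℝ) (hp : 0 ≤ p) (m a b : ℝ) (hm : 0 ≤ m) (hb : 0 ≤ b) (hab : b ≤ a) :
    ((m + a ^ 2) ^ p - (m + b ^ 2) ^ p) * b ≤ 2 * (p + 1) * ((m + a ^ 2) ^ p * (a - b)) := by
  have ha : 0 ≤ a := hb.trans hab
  rcases hb.eq_or_lt with h | hb'
  · subst h
    simp only [mul_zero, sub_zero]
    positivity
  have hx : 0 < m + a ^ 2 := by nlinarith
  have hy : 0 < m + b ^ 2 := by positivity
  set x := m + a ^ 2 with hxd
  set y := m + b ^ 2 with hyd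
  have hyx : y ≤ x := by nlinarith
  have hr0 : 0 < y / x := by positivity
  have hr1 : y / x ≤ 1 := (div_le_one hx).2 hyx
  have hB : y ^ p = x ^ p * (y / x) ^ p := by
    rw [← Real.mul_rpow hx.le hr0.le, mul_div_cancel₀ _ hx.ne']
  have key : 1 - (y / x) ^ p ≤ (p + 1) * (1 - y / x) := by
    rcases le_total 1 p with h1 | h1
    · have := one_add_mul_self_le_rpow_one_add (s := y / x - 1) (by linarith) h1
      rw [add_sub_cancel] at this
      nlinarith
    · have := Real.rpow_le_rpow_of_exponent_ge hr0 hr1 h1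
      rw [Real.rpow_one] at this
      nlinarith
  have h2 : (1 - y / x) * b ≤ 2 * (a - b) := by
    have : 1 - y / x = (a ^ 2 - b ^ 2) / x := by
      rw [hyd, eq_div_iff hx.ne', sub_mul, div_mul_cancel₀ _ hx.ne']; rw [hxd]; ring
    rw [this, div_mul_eq_mul_div, div_le_iff₀ hx]
    have h3 : (a + b) * b ≤ 2 * x := by nlinarith
    nlinarith [mul_le_mul_of_nonneg_left h3 (sub_nonneg.2 hab)]
  have hA : 0 ≤ x ^ p := by positivity
  rw [hB]
  calc (x ^ p - x ^ p * (y / x) ^ p) * b = x ^ p * ((1 - (y / x) ^ p) * b) := by ring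
    _ ≤ x ^ p * (((p + 1) * (1 - y / x)) * b) := by gcongr
    _ = x ^ p * ((p + 1) * ((1 - y / x) * b)) := by ring
    _ ≤ x ^ p * ((p + 1) * (2 * (a - b))) := by gcongr
    _ = _ := by ring

lemma aux_main (p : ℝ) (hp : 0 ≤ p) {N : ℕ} (m : ℝ) (hm : 0 ≤ m)
    (z w : EuclideanSpace ℝ (Fin N)) (hab : ‖w‖ ≤ ‖z‖) :
    (m + ‖z‖ ^ 2 + ‖w‖ ^ 2) ^ p * ‖z - w‖ ≤ 2 * 2 ^ p *
      ‖((m + ‖z‖ ^ 2) ^ p) • z - ((m + ‖w‖ ^ 2) ^ p) • w‖ ∧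
    ‖((m + ‖z‖ ^ 2) ^ p) • z - ((m + ‖w‖ ^ 2) ^ p) • w‖ ≤
      (2 * p + 3) * ((m + ‖z‖ ^ 2 + ‖w‖ ^ 2) ^ p * ‖z - w‖) := by
  have hb := norm_nonneg w
  have hsc := aux_scalar p hp m ‖z‖ ‖w‖ hm hb hab
  have hsq : ‖w‖ ^ 2 ≤ ‖z‖ ^ 2 := by gcongr
  have hAB : (m + ‖w‖ ^ 2) ^ p ≤ (m + ‖z‖ ^ 2) ^ p := by gcongr
  have hB : 0 ≤ (m + ‖w‖ ^ 2) ^ p := by positivity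
  have hAS : (m + ‖z‖ ^ 2) ^ p ≤ (m + ‖z‖ ^ 2 + ‖w‖ ^ 2) ^ p := by
    exact Real.rpow_le_rpow (by positivity) (by nlinarith) hp
  have hSA : (m + ‖z‖ ^ 2 + ‖w‖ ^ 2) ^ p ≤ 2 ^ p * (m + ‖z‖ ^ 2) ^ p := by
    rw [← Real.mul_rpow (by norm_num) (by positivity)]
    gcongr; linarith
  set A := (m + ‖z‖ ^ 2) ^ p
  set B := (m + ‖w‖ ^ 2) ^ p
  set S := (m + ‖z‖ ^ 2 + ‖w‖ ^ 2) ^ p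
  have hA : 0 ≤ A := hB.trans hAB
  have h2 : (0:ℝ) ≤ 2 ^ p := by positivity
  constructor
  · have hlow : A * ‖z - w‖ ≤ 2 * ‖A • z - B • w‖ := by
      rcases (norm_nonneg (z - w)).eq_or_lt with h | h
      · rw [← h]; simp
      have h3 := real_inner_le_norm (A • z - B • w) (z - w)
      have h4 : inner ℝ (A • z - B • w) (z - w) =
          (A + B) / 2 * ‖z - w‖ ^ 2 + (A - B) * (‖z‖ ^ 2 - ‖w‖ ^ 2) / 2 := by
        rw [norm_sub_sq_real]
        simp only [inner_sub_left, inner_sub_right, real_inner_smul_left,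
          real_inner_self_eq_norm_sq, real_inner_comm z w]
        ring
      have h5 : 0 ≤ (A - B) * (‖z‖ ^ 2 - ‖w‖ ^ 2) :=
        mul_nonneg (by linarith) (by linarith)
      refine le_of_mul_le_mul_right ?_ h
      nlinarith [mul_nonneg hB (sq_nonneg ‖z - w‖)]
    calc S * ‖z - w‖ ≤ 2 ^ p * A * ‖z - w‖ := by gcongr
      _ = 2 ^ p * (A * ‖z - w‖) := by ring
      _ ≤ 2 ^ p * (2 * ‖A • z - B • w‖) := by gcongr
      _ = _ := by ring
  · have h6 : A • z - B • w = A • (z - w) + (A - B) • w := by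
      rw [smul_sub, sub_smul]; abel
    have h7 : ‖z‖ - ‖w‖ ≤ ‖z - w‖ := norm_sub_norm_le z w
    calc ‖A • z - B • w‖ ≤ ‖A • (z - w)‖ + ‖(A - B) • w‖ := by rw [h6]; exact norm_add_le _ _
      _ = A * ‖z - w‖ + (A - B) * ‖w‖ := by
        rw [norm_smul, norm_smul, Real.norm_of_nonneg hA, Real.norm_of_nonneg (sub_nonneg.2 hAB)]
      _ ≤ A * ‖z - w‖ + 2 * (p + 1) * (A * (‖z‖ - ‖w‖)) := by gcongr
      _ ≤ A * ‖z - w‖ + 2 * (p + 1) * (A * ‖z - w‖) := by gcongr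
      _ = (2 * p + 3) * (A * ‖z - w‖) := by ring
      _ ≤ _ := by gcongr

/-- two-sided bound for `|V_{μ,t}(z₁) − V_{μ,t}(z₂)|²`, where
`V_{μ,t}(z) = (μ² + |z|²)^{(t−2)/4} z`. -/
theorem stmt1 (t : ℝ) (ht : 2 ≤ t) (N : ℕ) (hN : 0 < N) :
    ∃ C : ℝ, 1 ≤ C ∧
      ∀ μ : ℝ, μ ∈ Set.Icc (0 : ℝ) 1 →
        ∀ z₁ z₂ : EuclideanSpace ℝ (Fin N),
          C⁻¹ * ((μ ^ 2 + ‖z₁‖ ^ 2 + ‖z₂‖ ^ 2) ^ ((t - 2) / 2) * ‖z₁ - z₂‖ ^ 2) ≤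
              ‖((μ ^ 2 + ‖z₁‖ ^ 2) ^ ((t - 2) / 4)) • z₁ -
                  ((μ ^ 2 + ‖z₂‖ ^ 2) ^ ((t - 2) / 4)) • z₂‖ ^ 2 ∧
            ‖((μ ^ 2 + ‖z₁‖ ^ 2) ^ ((t - 2) / 4)) • z₁ -
                ((μ ^ 2 + ‖z₂‖ ^ 2) ^ ((t - 2) / 4)) • z₂‖ ^ 2 ≤
              C * ((μ ^ 2 + ‖z₁‖ ^ 2 + ‖z₂‖ ^ 2) ^ ((t - 2) / 2) * ‖z₁ - z₂‖ ^ 2) := by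
  obtain ⟨p, hpd⟩ : ∃ p, p = (t - 2) / 4 := ⟨_, rfl⟩
  have hp : 0 ≤ p := by rw [hpd]; linarith
  have hp2 : (t - 2) / 2 = p * (2 : ℕ) := by rw [hpd]; push_cast; ring
  rw [← hpd, hp2]
  have h2 : (0:ℝ) ≤ 2 ^ p := by positivity
  have hK : 1 ≤ 2 * 2 ^ p + (2 * p + 3) := by linarith
  refine ⟨(2 * 2 ^ p + (2 * p + 3)) ^ 2, one_le_pow₀ hK, fun μ _ z w => ?_⟩
  have hm : 0 ≤ μ ^ 2 := sq_nonneg μ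
  rw [Real.rpow_mul_natCast (by positivity), ← mul_pow]
  have main : (μ ^ 2 + ‖z‖ ^ 2 + ‖w‖ ^ 2) ^ p * ‖z - w‖ ≤ 2 * 2 ^ p *
      ‖((μ ^ 2 + ‖z‖ ^ 2) ^ p) • z - ((μ ^ 2 + ‖w‖ ^ 2) ^ p) • w‖ ∧
    ‖((μ ^ 2 + ‖z‖ ^ 2) ^ p) • z - ((μ ^ 2 + ‖w‖ ^ 2) ^ p) • w‖ ≤
      (2 * p + 3) * ((μ ^ 2 + ‖z‖ ^ 2 + ‖w‖ ^ 2) ^ p * ‖z - w‖) := by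
    rcases le_total ‖w‖ ‖z‖ with h | h
    · exact aux_main p hp _ hm z w h
    · have := aux_main p hp _ hm w z h
      rwa [norm_sub_rev w z, add_right_comm, norm_sub_rev (_ • w)] at this
  obtain ⟨l, u⟩ := main
  have hX : 0 ≤ (μ ^ 2 + ‖z‖ ^ 2 + ‖w‖ ^ 2) ^ p * ‖z - w‖ := by positivity
  have hY := norm_nonneg (((μ ^ 2 + ‖z‖ ^ 2) ^ p) • z - ((μ ^ 2 + ‖w‖ ^ 2) ^ p) • w)
  constructor
  · rw [inv_mul_le_iff₀ (by positivity), ← mul_pow]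
    refine pow_le_pow_left₀ hX (l.trans ?_) 2
    exact mul_le_mul_of_nonneg_right (by linarith) hY
  · rw [← mul_pow]
    refine pow_le_pow_left₀ hY (u.trans ?_) 2
    exact mul_le_mul_of_nonneg_right (by linarith) hX
end

section
/- For every real p ≥ 2 and every positive integer N there exists a constant c = c(p, N) > 0 such that for all μ ≥ 0 and all z, w ∈ ℝ^N, one has (μ² + |z|²)^{p/2} − (μ² + |w|²)^{p/2} − p (μ² + |w|²)^{(p−2)/2} ⟨w, z − w⟩ ≥ c (μ² + |z|² + |w|²)^{(p−2)/2} |z − w|². -/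
theorem rpow_split_aux (q A : ℝ) (hq : 1 ≤ q) (hA : 0 ≤ A) : A ^ q = A * A ^ (q - 1) := by
  have h := Real.rpow_add_of_nonneg hA zero_le_one (sub_nonneg.2 hq)
  rw [Real.rpow_one] at h
  rw [← h]
  congr 1
  ring

theorem bern_aux (q A B : ℝ) (hq : 1 ≤ q) (hA : 0 ≤ A) (hB : 0 ≤ B) :
    B * B ^ (q - 1) + q * B ^ (q - 1) * (A - B) ≤ A * A ^ (q - 1) := by
  rcases hB.eq_or_lt with h | h
  · subst h
    rcases hq.eq_or_lt with h1 | h1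
    · subst h1
      simp
    · rw [Real.zero_rpow (by linarith)]
      have := mul_nonneg hA (Real.rpow_nonneg hA (q - 1))
      simpa using this
  · have h0 : 0 ≤ A / B := div_nonneg hA hB
    have h1 := one_add_mul_self_le_rpow_one_add (s := A / B - 1) (by linarith) hq
    have h2 : 1 + (A / B - 1) = A / B := by ring
    rw [h2, Real.div_rpow hA hB, rpow_split_aux q A hq hA, rpow_split_aux q B hq hB] at h1
    have h3 : 0 < B * B ^ (q - 1) := by positivity
    rw [le_div_iff₀ h3] at h1
    refine le_trans (le_of_eq ?_) h1
    field_simp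

theorem main_aux (q A B D M : ℝ) (hq : 1 ≤ q) (hA : 0 ≤ A) (hB : 0 ≤ B) (hD : 0 ≤ D)
    (hDAB : D ≤ 2 * (A + B)) (hM0 : 0 ≤ M) (hM : M ≤ A + B) :
    1 / (16 * 2 ^ (q - 1)) * M ^ (q - 1) * D ≤
      A ^ q - B ^ q - q * B ^ (q - 1) * (A - B) + q * B ^ (q - 1) * D := by
  have hb := bern_aux q A B hq hA hB
  rw [rpow_split_aux q A hq hA, rpow_split_aux q B hq hB]
  have hq0 : 0 ≤ q - 1 := by linarith
  have hT : (0 : ℝ) < 2 ^ (q - 1) := by positivity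
  have ha0 := Real.rpow_nonneg hA (q - 1)
  have hb0 := Real.rpow_nonneg hB (q - 1)
  have hMb : M ^ (q - 1) ≤ 2 ^ (q - 1) * (A ^ (q - 1) + B ^ (q - 1)) := by
    rcases le_total A B with h | h
    · calc M ^ (q - 1) ≤ (2 * B) ^ (q - 1) := Real.rpow_le_rpow hM0 (by linarith) hq0
        _ = 2 ^ (q - 1) * B ^ (q - 1) := Real.mul_rpow (by norm_num) hB
        _ ≤ _ := mul_le_mul_of_nonneg_left (by linarith) hT.le
    · calc M ^ (q - 1) ≤ (2 * A) ^ (q - 1) := Real.rpow_le_rpow hM0 (by linarith) hq0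
        _ = 2 ^ (q - 1) * A ^ (q - 1) := Real.mul_rpow (by norm_num) hA
        _ ≤ _ := mul_le_mul_of_nonneg_left (by linarith) hT.le
  have hR : 1 / (16 * 2 ^ (q - 1)) * M ^ (q - 1) ≤ (A ^ (q - 1) + B ^ (q - 1)) / 16 := by
    calc _ ≤ 1 / (16 * 2 ^ (q - 1)) * (2 ^ (q - 1) * (A ^ (q - 1) + B ^ (q - 1))) := by gcongr
      _ = _ := by field_simp
  have hR2 := mul_le_mul_of_nonneg_right hR hD
  have hlt : A < B → 0 < B ^ (q - 1) ∧ A ^ (q - 1) ≤ B ^ (q - 1) := fun h =>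
    ⟨Real.rpow_pos_of_pos (by linarith) _, Real.rpow_le_rpow hA h.le hq0⟩
  generalize A ^ (q - 1) = a at *
  generalize B ^ (q - 1) = b at *
  refine hR2.trans ?_
  rcases le_total a (2 * q * b) with h | h
  · have h1 : (a + b) / 16 ≤ q * b := by nlinarith
    have := mul_le_mul_of_nonneg_right h1 hD
    linarith
  · have hBA : B ≤ A := by
      by_contra hc
      obtain ⟨h1, h2⟩ := hlt (not_le.1 hc)
      nlinarith
    have hba : b ≤ a := by nlinarith
    have h1 : (a + b) / 16 * D ≤ (a / 8) * (4 * A) := by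
      apply mul_le_mul <;> linarith
    have h2 : A * (2 * q * b) ≤ A * a := mul_le_mul_of_nonneg_left h hA
    have h3 : 0 ≤ (q - 1) * (B * b) := by positivity
    have h4 : 0 ≤ q * b * D := by positivity
    nlinarith


/-- strong monotonicity of `z ↦ (μ² + |z|²)^{p/2}` for `p ≥ 2`. -/
theorem stmt2 (p : ℝ) (hp : 2 ≤ p) (N : ℕ) (hN : 0 < N) :
    ∃ c : ℝ, 0 < c ∧
      ∀ μ : ℝ, 0 ≤ μ → ∀ z w : EuclideanSpace ℝ (Fin N),
        (μ ^ 2 + ‖z‖ ^ 2) ^ (p / 2) - (μ ^ 2 + ‖w‖ ^ 2) ^ (p / 2) -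
            p * (μ ^ 2 + ‖w‖ ^ 2) ^ ((p - 2) / 2) * (inner ℝ w (z - w) : ℝ) ≥
          c * (μ ^ 2 + ‖z‖ ^ 2 + ‖w‖ ^ 2) ^ ((p - 2) / 2) * ‖z - w‖ ^ 2 := by
  refine ⟨1 / (16 * 2 ^ (p / 2 - 1)), by positivity, fun μ hμ z w => ?_⟩
  have e : (p - 2) / 2 = p / 2 - 1 := by ring
  have hn : ‖z‖ ^ 2 = ‖w‖ ^ 2 + 2 * (inner ℝ w (z - w) : ℝ) + ‖z - w‖ ^ 2 := by
    have := norm_add_sq_real w (z - w)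
    rwa [add_sub_cancel] at this
  have hD : ‖z - w‖ ^ 2 ≤ 2 * ((μ ^ 2 + ‖z‖ ^ 2) + (μ ^ 2 + ‖w‖ ^ 2)) := by
    have h1 := norm_sub_le z w
    nlinarith [norm_nonneg (z - w), sq_nonneg (‖z‖ - ‖w‖), sq_nonneg μ]
  have := main_aux (p / 2) (μ ^ 2 + ‖z‖ ^ 2) (μ ^ 2 + ‖w‖ ^ 2) (‖z - w‖ ^ 2)
    (μ ^ 2 + ‖z‖ ^ 2 + ‖w‖ ^ 2) (by linarith) (by positivity) (by positivity) (by positivity)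
    hD (by positivity) (by nlinarith [sq_nonneg μ])
  rw [e]
  refine this.trans (le_of_eq ?_)
  have hi : (inner ℝ w (z - w) : ℝ) = (‖z‖ ^ 2 - ‖w‖ ^ 2 - ‖z - w‖ ^ 2) / 2 := by linarith
  rw [hi]
  ring
end

section
/- Let p ≥ 2 be real, μ ∈ [0,1], λ > 0, m a positive integer, and let F : ℝ^m → ℝ be differentiable and satisfy condition (H1), i.e. the map z ↦ F(z) − λ (μ² + |z|²)^{p/2} is convex on ℝ^m. Then there exists a constant c = c(p, m) > 0, independent of F, λ and μ, such that for all z, w ∈ ℝ^m, F(z) − F(w) − ⟨∇F(w), z − w⟩ ≥ c λ (μ² + |z|² + |w|²)^{(p−2)/2} |z − w|². -/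
lemma tangent_rpow (q x y : ℝ) (hq : 1 ≤ q) (hx : 0 ≤ x) (hy : 0 ≤ y) :
    y ^ q + q * y ^ (q - 1) * (x - y) ≤ x ^ q := by
  rcases hy.eq_or_lt with rfl | hy
  · rcases hq.eq_or_lt with rfl | hq
    · simp
    · rw [Real.zero_rpow (by linarith), Real.zero_rpow (by linarith)]
      simpa using Real.rpow_nonneg hx q
  · have h := one_add_mul_self_le_rpow_one_add (s := x / y - 1)
      (by have := div_nonneg hx hy.le; linarith) hq
    have e : (1 + (x / y - 1)) = x / y := by ring
    rw [e, Real.div_rpow hx hy.le, le_div_iff₀ (Real.rpow_pos_of_pos hy q)] at h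
    have e2 : y ^ q = y ^ (q - 1) * y := by
      rw [← Real.rpow_add_one hy.ne']; ring_nf
    refine le_trans (le_of_eq ?_) h
    rw [e2]; field_simp

lemma key_ineq (q a b d : ℝ) (hq : 1 ≤ q) (ha : 0 ≤ a) (hb : 0 ≤ b) (hd : 0 ≤ d)
    (hdab : d ≤ 2 * (a + b)) :
    (1 / 4) ^ (q - 1) / 8 * (a + b) ^ (q - 1) * d
      ≤ b ^ q - a ^ q - q * a ^ (q - 1) * (b - a - d) := by
  have hq1 : 0 ≤ q - 1 := by linarith
  have e : (1 / 4 : ℝ) ^ (q - 1) / 8 * (a + b) ^ (q - 1) * d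
      = ((a + b) / 4) ^ (q - 1) * d / 8 := by
    have : (a + b) / 4 = (1 / 4) * (a + b) := by ring
    rw [this, Real.mul_rpow (by norm_num) (by linarith)]; ring
  rw [e]
  set k := ((a + b) / 4) ^ (q - 1) with hk
  have hk0 : 0 ≤ k := Real.rpow_nonneg (by linarith) _
  have hkd : 0 ≤ k * d := mul_nonneg hk0 hd
  set A := a ^ (q - 1) with hA
  have hA0 : 0 ≤ A := Real.rpow_nonneg ha _
  rcases le_total b (3 * a) with h | h
  · have h1 := tangent_rpow q b a hq hb ha
    have h2 : k ≤ A := Real.rpow_le_rpow (by linarith) (by linarith) hq1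
    have h3 : k * d ≤ A * d := mul_le_mul_of_nonneg_right h2 hd
    have h4 : 0 ≤ (q - 1) * (A * d) := mul_nonneg hq1 (mul_nonneg hA0 hd)
    nlinarith
  · have h1 := tangent_rpow q b ((a + b) / 2) hq hb (by linarith)
    have h2 := tangent_rpow q ((a + b) / 2) a hq (by linarith) ha
    set E := ((a + b) / 2) ^ (q - 1) with hE
    have h3 : k ≤ E := Real.rpow_le_rpow (by linarith) (by linarith) hq1
    have h4 : A ≤ E := Real.rpow_le_rpow ha (by linarith) hq1
    have h5 : d / 8 ≤ (b - a) / 2 := by linarith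
    have h6 : q * (E - A) * (d / 8) ≤ q * (E - A) * ((b - a) / 2) :=
      mul_le_mul_of_nonneg_left h5 (mul_nonneg (by linarith) (by linarith))
    have h7 : k * d ≤ E * d := mul_le_mul_of_nonneg_right h3 hd
    have h8 : 0 ≤ (q - 1) * (E * d) := mul_nonneg hq1 (by linarith)
    have h9 : 0 ≤ q * (A * d) := mul_nonneg (by linarith) (mul_nonneg hA0 hd)
    nlinarith

/-- condition (H1) implies the strong monotonicity inequality (H4). -/
theorem stmt3 (p : ℝ) (hp : 2 ≤ p) (m : ℕ) (hm : 0 < m) :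
    ∃ c : ℝ, 0 < c ∧
      ∀ (μ lam : ℝ), μ ∈ Set.Icc (0 : ℝ) 1 → 0 < lam →
        ∀ F : EuclideanSpace ℝ (Fin m) → ℝ, Differentiable ℝ F →
          ConvexOn ℝ Set.univ (fun z => F z - lam * (μ ^ 2 + ‖z‖ ^ 2) ^ (p / 2)) →
          ∀ z w : EuclideanSpace ℝ (Fin m),
            F z - F w - (inner ℝ (gradient F w) (z - w) : ℝ) ≥
              c * lam * (μ ^ 2 + ‖z‖ ^ 2 + ‖w‖ ^ 2) ^ ((p - 2) / 2) * ‖z - w‖ ^ 2 := by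
  refine ⟨(1 / 4) ^ (p / 2 - 1) / 8, by positivity, ?_⟩
  intro μ lam _ hlam F hF hconv z w
  have hq : 1 ≤ p / 2 := by linarith
  have hpq : (p - 2) / 2 = p / 2 - 1 := by ring
  rw [hpq]
  set q := p / 2 with hqdef
  set L : ℝ → EuclideanSpace ℝ (Fin m) := fun t => w + t • (z - w) with hL
  have hL0 : L 0 = w := by simp [hL]
  have hL1 : L 1 = z := by simp [hL]
  have hLd : HasDerivAt L (z - w) 0 := by
    have h := ((hasDerivAt_id (0 : ℝ)).smul_const (z - w)).const_add w
    rw [one_smul] at h; exact h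
  have hFd : HasDerivAt (fun t => F (L t)) (inner ℝ (gradient F w) (z - w)) 0 := by
    have h1 : HasFDerivAt F (fderiv ℝ F (L 0)) (L 0) := (hF (L 0)).hasFDerivAt
    have h2 := h1.comp_hasDerivAt 0 hLd
    have h3 : (inner ℝ (gradient F w) (z - w) : ℝ) = fderiv ℝ F (L 0) (z - w) := by
      rw [hL0, gradient, InnerProductSpace.toDual_symm_apply]
    rw [h3]; exact h2
  have hNd : HasDerivAt (fun t => μ ^ 2 + ‖L t‖ ^ 2) (2 * inner ℝ w (z - w)) 0 := by
    have := (hLd.norm_sq).const_add (μ ^ 2)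
    rw [hL0] at this; exact this
  have hGd := (hNd.rpow_const (p := q) (Or.inr hq)).const_mul lam
  have hHd := hFd.sub hGd
  have hc : ConvexOn ℝ Set.univ
      (fun t : ℝ => F (L t) - lam * (μ ^ 2 + ‖L t‖ ^ 2) ^ q) := by
    have := hconv.comp_affineMap (AffineMap.lineMap w z : ℝ →ᵃ[ℝ] _)
    have e : (fun t : ℝ => F (L t) - lam * (μ ^ 2 + ‖L t‖ ^ 2) ^ q) =
        (fun z => F z - lam * (μ ^ 2 + ‖z‖ ^ 2) ^ q) ∘ (AffineMap.lineMap w z : ℝ →ᵃ[ℝ] _) := by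
      funext t
      simp [hL, AffineMap.lineMap_apply, add_comm]
    rw [e]; simpa using this
  have hs := hc.le_slope_of_hasDerivAt (Set.mem_univ 0) (Set.mem_univ 1) one_pos hHd
  rw [slope_def_field] at hs
  simp only [hL0, hL1, sub_zero, div_one] at hs
  have hd : 2 * (inner ℝ w (z - w) : ℝ) = ‖z‖ ^ 2 - ‖w‖ ^ 2 - ‖z - w‖ ^ 2 := by
    rw [norm_sub_sq_real, inner_sub_right, real_inner_self_eq_norm_sq, real_inner_comm]; ring
  have hpar := parallelogram_law_with_norm ℝ z w
  have hk := key_ineq q (μ ^ 2 + ‖w‖ ^ 2) (μ ^ 2 + ‖z‖ ^ 2) (‖z - w‖ ^ 2) hq (by positivity)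
    (by positivity) (by positivity) (by nlinarith [sq_nonneg μ, sq_nonneg ‖z + w‖])
  have hmono : (μ ^ 2 + ‖z‖ ^ 2 + ‖w‖ ^ 2) ^ (q - 1) ≤
      (μ ^ 2 + ‖w‖ ^ 2 + (μ ^ 2 + ‖z‖ ^ 2)) ^ (q - 1) :=
    Real.rpow_le_rpow (by positivity) (by nlinarith [sq_nonneg μ]) (by linarith)
  have hk2 : (1 / 4) ^ (q - 1) / 8 * (μ ^ 2 + ‖z‖ ^ 2 + ‖w‖ ^ 2) ^ (q - 1) * ‖z - w‖ ^ 2 ≤ _ :=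
    le_trans (by gcongr) hk
  have hk3 := mul_le_mul_of_nonneg_left hk2 hlam.le
  have e3 : μ ^ 2 + ‖z‖ ^ 2 - (μ ^ 2 + ‖w‖ ^ 2) - ‖z - w‖ ^ 2 = 2 * (inner ℝ w (z - w) : ℝ) := by
    rw [hd]; ring
  rw [e3] at hk3
  linarith
end

section
/- Let p ≥ 2 be real, μ ∈ [0,1], λ > 0, m a positive integer, and let F : ℝ^m → ℝ be differentiable and satisfy condition (H1), i.e. the map z ↦ F(z) − λ (μ² + |z|²)^{p/2} is convex on ℝ^m. Then there exists a constant C ≥ 0 such that F(z) ≥ (λ/2) |z|^p − C for all z ∈ ℝ^m. -/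
/-- condition (H1) implies the coercivity bound (H5). -/
theorem stmt4 (p : ℝ) (hp : 2 ≤ p) (μ lam : ℝ) (hμ : μ ∈ Set.Icc (0 : ℝ) 1)
    (hlam : 0 < lam) (m : ℕ) (hm : 0 < m)
    (F : EuclideanSpace ℝ (Fin m) → ℝ) (hF : Differentiable ℝ F)
    (hconv : ConvexOn ℝ Set.univ (fun z => F z - lam * (μ ^ 2 + ‖z‖ ^ 2) ^ (p / 2))) :
    ∃ C : ℝ, 0 ≤ C ∧ ∀ z : EuclideanSpace ℝ (Fin m), F z ≥ lam / 2 * ‖z‖ ^ p - C := by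
  obtain ⟨G, hG⟩ : ∃ G : EuclideanSpace ℝ (Fin m) → ℝ,
    G = (fun z => F z - lam * (μ ^ 2 + ‖z‖ ^ 2) ^ (p / 2)) := ⟨_, rfl⟩
  rw [← hG] at hconv
  obtain ⟨M, hM⟩ := (isCompact_closedBall (0 : EuclideanSpace ℝ (Fin m)) 1).exists_bound_of_continuousOn
    hF.continuous.continuousOn
  have hGM : ∀ z : EuclideanSpace ℝ (Fin m), ‖z‖ ≤ 1 → G z ≤ M := by
    intro z hz
    have h1 := hM z (by simpa using hz)
    have h2 : 0 ≤ lam * (μ ^ 2 + ‖z‖ ^ 2) ^ (p / 2) := by positivity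
    have h3 := le_abs_self (F z)
    rw [Real.norm_eq_abs] at h1
    rw [hG]
    dsimp only
    linarith
  have hlow : ∀ z : EuclideanSpace ℝ (Fin m), G 0 - (M - G 0) * ‖z‖ ≤ G z := by
    intro z
    by_cases hz : z = 0
    · simp [hz]
    have hr : 0 < ‖z‖ := norm_pos_iff.mpr hz
    have hc := hconv.2 (Set.mem_univ z) (Set.mem_univ (-(‖z‖⁻¹ • z)))
      (by positivity : 0 ≤ 1 / (1 + ‖z‖)) (by positivity : 0 ≤ ‖z‖ / (1 + ‖z‖))
      (by field_simp)
    have h0 : (1 / (1 + ‖z‖)) • z + (‖z‖ / (1 + ‖z‖)) • (-(‖z‖⁻¹ • z)) = 0 := by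
      rw [smul_neg, smul_smul, ← sub_eq_add_neg, ← sub_smul]
      have : 1 / (1 + ‖z‖) - ‖z‖ / (1 + ‖z‖) * ‖z‖⁻¹ = 0 := by field_simp; simp
      rw [this, zero_smul]
    rw [h0] at hc
    have hb := hGM (-(‖z‖⁻¹ • z)) (by rw [norm_neg, norm_smul, norm_inv, norm_norm, inv_mul_cancel₀ hr.ne'])
    simp only [smul_eq_mul] at hc
    have h4 : G 0 * (1 + ‖z‖) ≤ G z + ‖z‖ * G (-(‖z‖⁻¹ • z)) := by
      have := mul_le_mul_of_nonneg_right hc (by positivity : 0 ≤ 1 + ‖z‖)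
      refine this.trans (le_of_eq ?_)
      field_simp
    nlinarith [mul_le_mul_of_nonneg_left hb hr.le]
  refine ⟨|G 0| + lam / 2 + (M - G 0) ^ 2 / (2 * lam), by positivity, ?_⟩
  intro z
  have h1 := hlow z
  have h2 : F z = G z + lam * (μ ^ 2 + ‖z‖ ^ 2) ^ (p / 2) := by rw [hG]; ring
  have hr : 0 ≤ ‖z‖ := norm_nonneg z
  have h3 : ‖z‖ ^ p ≤ (μ ^ 2 + ‖z‖ ^ 2) ^ (p / 2) := by
    have : ‖z‖ ^ p = (‖z‖ ^ 2) ^ (p / 2) := by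
      rw [← Real.rpow_natCast, ← Real.rpow_mul hr]
      congr 1
      push_cast
      ring
    rw [this]
    exact Real.rpow_le_rpow (by positivity) (by nlinarith [sq_nonneg μ]) (by linarith)
  have h4 : ‖z‖ ^ 2 - 1 ≤ ‖z‖ ^ p := by
    rcases le_total 1 ‖z‖ with h | h
    · have := Real.rpow_le_rpow_of_exponent_le h hp
      rw [Real.rpow_two] at this
      linarith
    · have : 0 ≤ ‖z‖ ^ p := by positivity
      nlinarith
  have h5 : 0 ≤ (lam * ‖z‖ - (M - G 0)) ^ 2 / (2 * lam) := by positivity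
  have h6 : (lam * ‖z‖ - (M - G 0)) ^ 2 / (2 * lam)
      = lam / 2 * ‖z‖ ^ 2 - (M - G 0) * ‖z‖ + (M - G 0) ^ 2 / (2 * lam) := by
    field_simp
    ring
  have h7 := neg_abs_le (G 0)
  have h8 := mul_le_mul_of_nonneg_left h3 hlam.le
  have h9 := mul_le_mul_of_nonneg_left h4 (half_pos hlam).le
  rw [h6] at h5
  linarith
end

section
/- Let p ≥ 2 be real, μ ∈ [0,1], λ > 0, m a positive integer, and let F : ℝ^m → ℝ satisfy condition (H1), i.e. the map z ↦ F(z) − λ (μ² + |z|²)^{p/2} is convex on ℝ^m. Then there exists a constant c = c(p, m) > 0, independent of F, λ and μ, such that for all z, w ∈ ℝ^m, F((z + w)/2) + c λ |z − w|^p ≤ (F(z) + F(w))/2. -/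
/-- condition (H1) implies uniform `p`-convexity of `F`. -/
theorem stmt5 (p : ℝ) (hp : 2 ≤ p) (m : ℕ) (hm : 0 < m) :
    ∃ c : ℝ, 0 < c ∧
      ∀ (μ lam : ℝ), μ ∈ Set.Icc (0 : ℝ) 1 → 0 < lam →
        ∀ F : EuclideanSpace ℝ (Fin m) → ℝ,
          ConvexOn ℝ Set.univ (fun z => F z - lam * (μ ^ 2 + ‖z‖ ^ 2) ^ (p / 2)) →
          ∀ z w : EuclideanSpace ℝ (Fin m),
            F ((2 : ℝ)⁻¹ • (z + w)) + c * lam * ‖z - w‖ ^ p ≤ (F z + F w) / 2 := by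
  refine ⟨(1 / 4 : ℝ) ^ (p / 2), by positivity, ?_⟩
  intro μ lam _ hlam F hF z w
  have hq : 1 ≤ p / 2 := by linarith
  have h1 := hF.2 (Set.mem_univ z) (Set.mem_univ w) (by norm_num : (0 : ℝ) ≤ 2⁻¹)
    (by norm_num : (0 : ℝ) ≤ 2⁻¹) (by norm_num)
  rw [← smul_add] at h1
  simp only [smul_eq_mul] at h1
  have h2 := (convexOn_rpow hq).2
    (show μ ^ 2 + ‖z‖ ^ 2 ∈ Set.Ici (0 : ℝ) from Set.mem_Ici.2 (by positivity))
    (show μ ^ 2 + ‖w‖ ^ 2 ∈ Set.Ici (0 : ℝ) from Set.mem_Ici.2 (by positivity))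
    (by norm_num : (0 : ℝ) ≤ 2⁻¹) (by norm_num : (0 : ℝ) ≤ 2⁻¹) (by norm_num)
  simp only [smul_eq_mul] at h2
  have hpar := parallelogram_law_with_norm ℝ z w
  have hn : ‖(2 : ℝ)⁻¹ • (z + w)‖ = 2⁻¹ * ‖z + w‖ := by
    rw [norm_smul]; norm_num
  have he : 2⁻¹ * (μ ^ 2 + ‖z‖ ^ 2) + 2⁻¹ * (μ ^ 2 + ‖w‖ ^ 2)
      = (μ ^ 2 + ‖(2 : ℝ)⁻¹ • (z + w)‖ ^ 2) + 1 / 4 * ‖z - w‖ ^ 2 := by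
    rw [hn]; nlinarith
  have hsup : ∀ a b : ℝ, 0 ≤ a → 0 ≤ b → a ^ (p / 2) + b ^ (p / 2) ≤ (a + b) ^ (p / 2) := by
    intro a b ha hb
    have := NNReal.add_rpow_le_rpow_add (⟨a, ha⟩ : NNReal) ⟨b, hb⟩ hq
    exact_mod_cast this
  have h3 := hsup (μ ^ 2 + ‖(2 : ℝ)⁻¹ • (z + w)‖ ^ 2) (1 / 4 * ‖z - w‖ ^ 2)
    (by positivity) (by positivity)
  have hD : (1 / 4 * ‖z - w‖ ^ 2) ^ (p / 2) = (1 / 4 : ℝ) ^ (p / 2) * ‖z - w‖ ^ p := by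
    rw [Real.mul_rpow (by norm_num) (by positivity), ← Real.rpow_natCast,
      ← Real.rpow_mul (norm_nonneg _)]
    congr 2
    push_cast; ring
  rw [he] at h2
  rw [hD] at h3
  have h4 := mul_le_mul_of_nonneg_left (h3.trans h2) hlam.le
  linarith
end

section
/- Let q ≥ 1 and Λ > 0 be real, m a positive integer, and let F : ℝ^m → ℝ be convex with |F(z)| ≤ Λ (1 + |z|^q) for all z ∈ ℝ^m. Then there exists a constant C = C(q) > 0, independent of F, Λ and m, such that for all z, w ∈ ℝ^m, |F(z) − F(w)| ≤ C Λ (1 + |z| + |w|)^{q−1} |z − w|. -/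
theorem stmt6_aux (q : ℝ) (hq : 1 ≤ q) (m : ℕ) (Lam : ℝ) (hL : 0 < Lam)
    (F : EuclideanSpace ℝ (Fin m) → ℝ) (hF : ConvexOn ℝ Set.univ F)
    (hG : ∀ z : EuclideanSpace ℝ (Fin m), |F z| ≤ Lam * (1 + ‖z‖ ^ q))
    (z w : EuclideanSpace ℝ (Fin m)) (R : ℝ) (hR : R = 1 + ‖z‖ + ‖w‖) :
    F z - F w ≤ (4 * 2 ^ q) * Lam * R ^ (q - 1) * ‖z - w‖ := by
  have hz := norm_nonneg z
  have hw := norm_nonneg w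
  have hR1 : 1 ≤ R := by linarith
  have hR0 : 0 < R := by linarith
  by_cases hzw : z = w
  · simp [hzw]
  have hd : 0 < ‖z - w‖ := norm_pos_iff.mpr (sub_ne_zero.mpr hzw)
  have hdR : ‖z - w‖ ≤ R := by linarith [norm_sub_le z w]
  set d := ‖z - w‖ with hdd
  obtain ⟨u, hu⟩ : ∃ u, u = w + (R / d) • (z - w) := ⟨_, rfl⟩
  have ht1 : d / R ≤ 1 := (div_le_one hR0).mpr hdR
  have ht0 : 0 < d / R := div_pos hd hR0
  have hcomb : (1 - d / R) • w + (d / R) • u = z := by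
    have h1 : d / R * (R / d) = 1 := by field_simp
    rw [hu, smul_add, smul_smul, h1, sub_smul, one_smul, one_smul]
    abel
  have hc := hF.2 (Set.mem_univ w) (Set.mem_univ u) (sub_nonneg.mpr ht1) ht0.le (by ring)
  rw [hcomb] at hc
  simp only [smul_eq_mul] at hc
  have hun : ‖u‖ ≤ 2 * R := by
    have h2 : ‖(R / d) • (z - w)‖ = R := by
      rw [norm_smul, Real.norm_of_nonneg (by positivity), ← hdd]
      field_simp
    have := norm_add_le w ((R / d) • (z - w))
    rw [← hu, h2] at this
    linarith
  have hb : ∀ v : EuclideanSpace ℝ (Fin m), ‖v‖ ≤ 2 * R →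
      |F v| ≤ Lam * (2 * (2 ^ q * R ^ q)) := by
    intro v hv
    refine (hG v).trans (mul_le_mul_of_nonneg_left ?_ hL.le)
    rw [← Real.mul_rpow (by norm_num) hR0.le]
    have h1 : ‖v‖ ^ q ≤ (2 * R) ^ q :=
      Real.rpow_le_rpow (norm_nonneg _) hv (by linarith)
    have h2 : 1 ≤ (2 * R) ^ q := Real.one_le_rpow (by linarith) (by linarith)
    linarith
  have hbu := (abs_le.mp (hb u hun)).2
  have hbw := (abs_le.mp (hb w (by linarith))).1
  have hk : F u - F w ≤ 4 * 2 ^ q * Lam * R ^ q := by linarith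
  have hpow : R ^ (q - 1) = R ^ q / R := Real.rpow_sub_one hR0.ne' q
  calc F z - F w ≤ d / R * (F u - F w) := by linarith
    _ ≤ d / R * (4 * 2 ^ q * Lam * R ^ q) := mul_le_mul_of_nonneg_left hk ht0.le
    _ = _ := by rw [hpow]; ring


/-- a convex function with `q`-growth is locally Lipschitz with the
natural growth of the Lipschitz constant. -/
theorem stmt6 (q : ℝ) (hq : 1 ≤ q) :
    ∃ C : ℝ, 0 < C ∧
      ∀ m : ℕ, 0 < m → ∀ Lam : ℝ, 0 < Lam →
        ∀ F : EuclideanSpace ℝ (Fin m) → ℝ, ConvexOn ℝ Set.univ F →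
          (∀ z : EuclideanSpace ℝ (Fin m), |F z| ≤ Lam * (1 + ‖z‖ ^ q)) →
          ∀ z w : EuclideanSpace ℝ (Fin m),
            |F z - F w| ≤ C * Lam * (1 + ‖z‖ + ‖w‖) ^ (q - 1) * ‖z - w‖ := by
  refine ⟨4 * 2 ^ q, by positivity, ?_⟩
  intro m _ Lam hL F hF hG z w
  rw [abs_le]
  have h1 := stmt6_aux q hq m Lam hL F hF hG z w _ rfl
  have h2 := stmt6_aux q hq m Lam hL F hF hG w z (1 + ‖z‖ + ‖w‖) (by ring)
  rw [norm_sub_rev w z] at h2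
  constructor <;> linarith
end

section
/- Let q ≥ 1 and Λ > 0 be real, m a positive integer, and let F : ℝ^m → ℝ be convex and differentiable with |F(z)| ≤ Λ (1 + |z|^q) for all z ∈ ℝ^m. Then there exists a constant C = C(q) > 0, independent of F, Λ and m, such that |∇F(z)| ≤ C Λ (1 + |z|)^{q−1} for all z ∈ ℝ^m. -/
/-- gradient bound for convex differentiable functions with `q`-growth. -/
theorem stmt7 (q : ℝ) (hq : 1 ≤ q) :
    ∃ C : ℝ, 0 < C ∧
      ∀ m : ℕ, 0 < m → ∀ Lam : ℝ, 0 < Lam →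
        ∀ F : EuclideanSpace ℝ (Fin m) → ℝ, ConvexOn ℝ Set.univ F → Differentiable ℝ F →
          (∀ z : EuclideanSpace ℝ (Fin m), |F z| ≤ Lam * (1 + ‖z‖ ^ q)) →
          ∀ z : EuclideanSpace ℝ (Fin m),
            ‖gradient F z‖ ≤ C * Lam * (1 + ‖z‖) ^ (q - 1) := by
  refine ⟨3 + 2 ^ q, by positivity, ?_⟩
  intro m _ Lam hL F hc hd hb z
  by_cases hg : gradient F z = 0
  · rw [hg, norm_zero]
    positivity
  have hgn : 0 < ‖gradient F z‖ := norm_pos_iff.mpr hg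
  set g := gradient F z with hgdef
  set R : ℝ := 1 + ‖z‖ with hR
  have hz0 : 0 ≤ ‖z‖ := norm_nonneg z
  have hR1 : 1 ≤ R := by linarith
  have hR0 : 0 < R := by linarith
  set v := (R / ‖g‖) • g with hv
  have hvn : ‖v‖ = R := by
    rw [hv, norm_smul, Real.norm_of_nonneg (by positivity)]
    field_simp
  have hsub : R * ‖g‖ ≤ F (z + v) - F z := by
    have hline : HasDerivAt (fun t : ℝ => z + t • v) v 0 := by
      simpa using ((hasDerivAt_id (0:ℝ)).smul_const v).const_add z
    have hF : HasFDerivAt F (fderiv ℝ F z) (z + (0:ℝ) • v) := by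
      simpa using (hd z).hasFDerivAt
    have hφ : HasDerivAt (fun t : ℝ => F (z + t • v)) (fderiv ℝ F z v) 0 :=
      hF.comp_hasDerivAt (0:ℝ) hline
    have hval : fderiv ℝ F z v = R * ‖g‖ := by
      have h1 : fderiv ℝ F z v = inner ℝ g v := by
        rw [hgdef, gradient, InnerProductSpace.toDual_symm_apply]
      rw [h1, hv, real_inner_smul_right, real_inner_self_eq_norm_sq]
      field_simp
    have hcφ : ConvexOn ℝ Set.univ (fun t : ℝ => F (z + t • v)) := by
      refine ⟨convex_univ, ?_⟩
      intro s _ t _ a b ha hb' hab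
      have := hc.2 (Set.mem_univ (z + s • v)) (Set.mem_univ (z + t • v)) ha hb' hab
      have e : a • (z + s • v) + b • (z + t • v) = z + (a • s + b • t) • v := by
        have : z = (a + b) • z := by rw [hab, one_smul]
        conv_rhs => rw [this]
        simp only [smul_eq_mul]
        module
      rw [e] at this
      exact this
    have := hcφ.le_slope_of_hasDerivAt (Set.mem_univ 0) (Set.mem_univ 1) one_pos hφ
    rw [hval] at this
    simpa [slope_def_field] using this
  have h1 := (abs_le.mp (hb z)).1
  have h2 := (abs_le.mp (hb (z + v))).2
  have hw : ‖z + v‖ ≤ 2 * R := by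
    have := norm_add_le z v
    linarith
  have p1 : ‖z‖ ^ q ≤ R ^ q := Real.rpow_le_rpow hz0 (by linarith) (by linarith)
  have p2 : ‖z + v‖ ^ q ≤ 2 ^ q * R ^ q := by
    rw [← Real.mul_rpow (by norm_num) hR0.le]
    exact Real.rpow_le_rpow (norm_nonneg _) hw (by linarith)
  have p3 : 1 ≤ R ^ q := Real.one_le_rpow hR1 (by linarith)
  have p4 : R ^ q = R * R ^ (q - 1) := by
    rw [Real.rpow_sub_one hR0.ne']
    field_simp
  have h3 : R * ‖g‖ ≤ Lam * ((3 + 2 ^ q) * R ^ q) := by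
    calc R * ‖g‖ ≤ Lam * (2 + ‖z‖ ^ q + ‖z + v‖ ^ q) := by linarith
      _ ≤ _ := by
        apply mul_le_mul_of_nonneg_left _ hL.le
        linarith
  rw [p4] at h3
  refine le_of_mul_le_mul_left (h3.trans (le_of_eq ?_)) hR0
  ring
end

section
/- Let ρ < σ be real numbers, δ ∈ (0, 1], and let b : ℝ → ℝ be measurable with b(r) ≥ 1 for almost every r ∈ (ρ, σ) and with r ↦ b(r)^δ Lebesgue integrable on (ρ, σ). Define φ : [ρ, σ] → ℝ by φ(r) = 1 − (∫_ρ^r b(τ)^{−1} dτ) / (∫_ρ^σ b(τ)^{−1} dτ). Then for all ρ ≤ r₁ < r₂ ≤ σ one has (φ(r₁) − φ(r₂)) / (r₂ − r₁) ≤ (σ − ρ)^{−1−1/δ} (∫_ρ^σ b(r)^δ dr)^{1/δ}. -/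
open MeasureTheory

lemma aux_pt (b m δ : ℝ) (hb : 1 ≤ b) (hm : 0 < m) (hδ : 0 < δ) :
    1 - (1 / δ) * (b ^ δ / m - 1) ≤ b⁻¹ * m ^ (1 / δ) := by
  have hb0 : 0 < b := by linarith
  have h1 : b⁻¹ * m ^ (1 / δ) = Real.exp ((1 / δ) * Real.log m - Real.log b) := by
    rw [Real.exp_sub, Real.exp_log hb0, Real.rpow_def_of_pos hm, mul_comm (1 / δ)]
    field_simp
  have h2 := Real.add_one_le_exp ((1 / δ) * Real.log m - Real.log b)
  have hbd : 0 < b ^ δ := Real.rpow_pos_of_pos hb0 δ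
  have h3 := Real.log_le_sub_one_of_pos (div_pos hbd hm)
  rw [Real.log_div hbd.ne' hm.ne', Real.log_rpow hb0] at h3
  have h4 := mul_le_mul_of_nonneg_left h3 (one_div_pos.2 hδ).le
  have h5 : (1 / δ) * (δ * Real.log b - Real.log m) = Real.log b - (1 / δ) * Real.log m := by
    field_simp
  rw [h1]
  linarith

/-- difference-quotient bound for the optimised radial cut-off profile. -/
theorem stmt10 (ρ σ δ : ℝ) (hρσ : ρ < σ) (hδ : δ ∈ Set.Ioc (0 : ℝ) 1)
    (b : ℝ → ℝ) (hb_meas : Measurable b)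
    (hb : ∀ᵐ r ∂(volume.restrict (Set.Ioo ρ σ)), 1 ≤ b r)
    (hint : IntegrableOn (fun r => b r ^ δ) (Set.Ioo ρ σ)) :
    let φ : ℝ → ℝ := fun r =>
      1 - (∫ τ in ρ..r, (b τ)⁻¹) / (∫ τ in ρ..σ, (b τ)⁻¹)
    ∀ r₁ r₂ : ℝ, ρ ≤ r₁ → r₁ < r₂ → r₂ ≤ σ →
      (φ r₁ - φ r₂) / (r₂ - r₁) ≤
        (σ - ρ) ^ (-1 - 1 / δ) * (∫ r in Set.Ioo ρ σ, b r ^ δ) ^ (1 / δ) := by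
  intro φ r₁ r₂ h1 h12 h2
  have hδ0 : 0 < δ := hδ.1
  have hL : 0 < σ - ρ := by linarith
  have hvol : volume.real (Set.Ioo ρ σ) = σ - ρ := by
    rw [Real.volume_real_Ioo_of_le hρσ.le]
  have hinv : IntegrableOn (fun r => (b r)⁻¹) (Set.Ioo ρ σ) := by
    refine Integrable.mono' (g := fun _ => (1 : ℝ)) (integrable_const _)
      hb_meas.inv.aestronglyMeasurable ?_
    filter_upwards [hb] with r hr
    rw [Real.norm_of_nonneg (by positivity)]
    exact inv_le_one_of_one_le₀ hr
  have hone : IntegrableOn (fun _ : ℝ => (1 : ℝ)) (Set.Ioo ρ σ) := integrable_const _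
  set M := ∫ r in Set.Ioo ρ σ, b r ^ δ with hM
  have hMpos : 0 < M := by
    have : ∫ r in Set.Ioo ρ σ, (1 : ℝ) ≤ M := by
      refine integral_mono_ae hone hint ?_
      filter_upwards [hb] with r hr
      exact Real.one_le_rpow hr hδ0.le
    rw [setIntegral_const, hvol] at this
    simp at this
    linarith
  set m := M / (σ - ρ) with hm
  have hmpos : 0 < m := div_pos hMpos hL
  set J := ∫ τ in ρ..σ, (b τ)⁻¹ with hJ
  have hJ' : J = ∫ r in Set.Ioo ρ σ, (b r)⁻¹ := by
    rw [hJ, intervalIntegral.integral_of_le hρσ.le, integral_Ioc_eq_integral_Ioo]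
  have key : σ - ρ ≤ J * m ^ (1 / δ) := by
    have hq : IntegrableOn (fun r => (1 / δ) * (b r ^ δ / m - 1)) (Set.Ioo ρ σ) :=
      ((hint.div_const m).sub hone).const_mul (1 / δ)
    have hi : ∫ r in Set.Ioo ρ σ, (1 - (1 / δ) * (b r ^ δ / m - 1)) ≤
        ∫ r in Set.Ioo ρ σ, (b r)⁻¹ * m ^ (1 / δ) := by
      refine integral_mono_ae
        (hone.sub (((hint.div_const m).sub hone).const_mul (1 / δ))) (hinv.mul_const _) ?_
      filter_upwards [hb] with r hr
      exact aux_pt _ _ _ hr hmpos hδ0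
    rw [integral_mul_const, ← hJ', integral_sub hone hq, integral_const_mul,
      integral_sub (hint.div_const m) hone, integral_div, setIntegral_const, hvol, ← hM] at hi
    have : M / m = σ - ρ := by rw [hm]; field_simp
    rw [this] at hi
    simpa using hi
  have hmp : 0 < m ^ (1 / δ) := Real.rpow_pos_of_pos hmpos _
  have hJpos : 0 < J := by
    by_contra h
    push Not at h
    nlinarith [mul_nonneg (neg_nonneg.2 h) hmp.le]
  have hii : IntervalIntegrable (fun τ => (b τ)⁻¹) volume ρ σ := by
    rw [intervalIntegrable_iff_integrableOn_Ioo_of_le hρσ.le]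
    exact hinv
  have hi1 : IntervalIntegrable (fun τ => (b τ)⁻¹) volume ρ r₁ := hii.mono_set (by
    rw [Set.uIcc_of_le h1, Set.uIcc_of_le hρσ.le]; exact Set.Icc_subset_Icc le_rfl (by linarith))
  have hi2 : IntervalIntegrable (fun τ => (b τ)⁻¹) volume ρ r₂ := hii.mono_set (by
    rw [Set.uIcc_of_le (by linarith), Set.uIcc_of_le hρσ.le]
    exact Set.Icc_subset_Icc le_rfl (by linarith))
  have hdiff : (∫ τ in ρ..r₂, (b τ)⁻¹) - (∫ τ in ρ..r₁, (b τ)⁻¹) ≤ r₂ - r₁ := by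
    rw [intervalIntegral.integral_interval_sub_left hi2 hi1,
      intervalIntegral.integral_of_le h12.le, integral_Ioc_eq_integral_Ioo]
    have hsub : Set.Ioo r₁ r₂ ⊆ Set.Ioo ρ σ := Set.Ioo_subset_Ioo h1 h2
    have : ∫ r in Set.Ioo r₁ r₂, (b r)⁻¹ ≤ ∫ r in Set.Ioo r₁ r₂, (1 : ℝ) := by
      refine integral_mono_ae (hinv.mono_set hsub) (hone.mono_set hsub) ?_
      filter_upwards [ae_restrict_of_ae_restrict_of_subset hsub hb] with r hr
      exact inv_le_one_of_one_le₀ hr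
    rw [setIntegral_const, Real.volume_real_Ioo_of_le h12.le] at this
    simpa using this
  have hrhs : (σ - ρ) ^ (-1 - 1 / δ) * M ^ (1 / δ) = m ^ (1 / δ) / (σ - ρ) := by
    rw [hm, Real.div_rpow hMpos.le hL.le, Real.rpow_sub hL, Real.rpow_neg_one]
    field_simp
  rw [hrhs]
  have hφ : φ r₁ - φ r₂ = ((∫ τ in ρ..r₂, (b τ)⁻¹) - (∫ τ in ρ..r₁, (b τ)⁻¹)) / J := by
    simp only [φ]
    ring
  have hd : 0 < r₂ - r₁ := by linarith
  calc (φ r₁ - φ r₂) / (r₂ - r₁) ≤ ((r₂ - r₁) / J) / (r₂ - r₁) := by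
        rw [hφ]; gcongr
    _ = 1 / J := by field_simp
    _ ≤ m ^ (1 / δ) / (σ - ρ) := by
        rw [div_le_div_iff₀ hJpos hL]; linarith
end
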